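/- Let R be a commutative differential ring in which 2 is invertible, and let L ∈ R((∂^{-1})) be a pseudodifferential operator satisfying L^* = -∂·L·∂^{-1}, where * is the formal adjoint. Then for every integer l ≥ 0 the residue Res_∂(L^{2l+1}·∂^{-1}) vanishes; equivalently, the coefficient of ∂^0 in L^{2l+1} is zero. -/

import Mathlib

/-! Let `P = L^{2l+1}∂^{-1}`. Since `L^* = -∂L∂^{-1}`, conjugation by
`∂` gives `(L^{2l+1})^* = -∂L^{2l+1}∂^{-1}`, and hence `P^* = (∂^{-1})^*(L^{2l+1})^* = P`. On the
other hand the adjoint changes the sign of every residue, so `2 Res P = 0`.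

This rests on two facts: the product is associative (`mul_assoc'`), and the adjoint is an
anti-homomorphism (`adj_mul`). Both are reduced to left multiplication by `∂`, which acts on
coefficients by `(∂S)_n = S_{n-1} + d(S_n)` and is injective because orders are bounded above.

* Pascal's rule gives `∂^{a+1}S = ∂(∂^a S)`, and the product is `PQ = Σ_m p_m (∂^m Q)`, a finite
  sum in each coefficient. A direct check gives `(∂Q)S = ∂(QS)`; induction in both directions gives
  `(∂^a Q)S = ∂^a(QS)` for all integers `a`; exchanging finite sums gives associativity.
* In the same way `(∂Q)^* = -Q^*∂` and `(P∂)^* = -∂P^*` are summations by parts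
  (`sum_pascal_sg`). They extend to all powers of `∂`, the case of left multiplication by a function
  follows from associativity, and expanding `PQ = Σ_m p_m ∂^m Q` gives the general case.
-/

namespace ExtendedDToda

/-- Generalized binomial coefficient `C(n, j)` for an integer `n`:
`C(n,j) = n(n-1)⋯(n-j+1)/j!`. -/
def zchoose (n : ℤ) (j : ℕ) : ℤ :=
  if 0 ≤ n then ((n.toNat).choose j : ℤ)
  else (-1) ^ j * ((((j : ℤ) - 1 - n).toNat).choose j : ℤ)

/-- Pseudodifferential operators over `R`: formal series `Σ_{i ≤ N} f_i ∂^i`,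
recorded by the left coefficient function `i ↦ f_i`, with support bounded above. -/
structure PDO (R : Type) [CommRing R] : Type where
  coeff : ℤ → R
  bdd : ∃ N : ℤ, ∀ n : ℤ, N < n → coeff n = 0

namespace PDO

variable {R : Type} [CommRing R] (d : Derivation ℤ R R)

/-- The constant operator `f·∂^0`. -/
def ofR (f : R) : PDO R :=
  ⟨fun n => if n = 0 then f else 0, ⟨0, fun n hn => if_neg (by omega)⟩⟩

/-- The operator `∂^k`, `k ∈ ℤ`. -/
def Dpow (k : ℤ) : PDO R :=
  ⟨fun n => if n = k then (1 : R) else 0, ⟨k, fun n hn => if_neg (by omega)⟩⟩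

def add (P Q : PDO R) : PDO R where
  coeff n := P.coeff n + Q.coeff n
  bdd := by
    obtain ⟨N, hN⟩ := P.bdd
    obtain ⟨M, hM⟩ := Q.bdd
    exact ⟨max N M, fun n hn => by
      beta_reduce
      rw [hN n ((le_max_left N M).trans_lt hn),
        hM n ((le_max_right N M).trans_lt hn), add_zero]⟩

def neg (P : PDO R) : PDO R where
  coeff n := -P.coeff n
  bdd := by
    obtain ⟨N, hN⟩ := P.bdd
    exact ⟨N, fun n hn => by beta_reduce; rw [hN n hn, neg_zero]⟩

def sub (P Q : PDO R) : PDO R := add P (neg Q)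

/-- The product of pseudodifferential operators, determined by the relation
`∂^n·f = Σ_{j ≥ 0} C(n,j) ∂^j(f) ∂^{n-j}` (valid for all `n ∈ ℤ`). -/
noncomputable def mul (P Q : PDO R) : PDO R where
  coeff n := ∑ᶠ p : ℤ × ℕ,
    P.coeff p.1 * (zchoose p.1 p.2 • (⇑d)^[p.2] (Q.coeff (n - p.1 + p.2)))
  bdd := by
    obtain ⟨N, hN⟩ := P.bdd
    obtain ⟨M, hM⟩ := Q.bdd
    refine ⟨N + M, fun n hn => ?_⟩
    have hz : (⇑d) (0 : R) = 0 := by simp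
    have h : ∀ p : ℤ × ℕ,
        P.coeff p.1 * (zchoose p.1 p.2 • (⇑d)^[p.2] (Q.coeff (n - p.1 + p.2))) = 0 := by
      intro p
      by_cases hp : p.1 ≤ N
      · rw [hM _ (by omega), Function.iterate_fixed hz p.2, smul_zero, mul_zero]
      · rw [hN _ (by omega), zero_mul]
    beta_reduce
    rw [finsum_congr h, finsum_zero]

/-- The formal adjoint `(Σ_i f_i ∂^i)^* = Σ_i (-∂)^i f_i`. -/
noncomputable def adj (P : PDO R) : PDO R where
  coeff n := ∑ᶠ j : ℕ,
    (((-1 : ℤˣ) ^ (n + (j : ℤ)) : ℤˣ) : ℤ) •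
      (zchoose (n + (j : ℤ)) j • (⇑d)^[j] (P.coeff (n + (j : ℤ))))
  bdd := by
    obtain ⟨N, hN⟩ := P.bdd
    refine ⟨N, fun n hn => ?_⟩
    have hz : (⇑d) (0 : R) = 0 := by simp
    have h : ∀ j : ℕ,
        (((-1 : ℤˣ) ^ (n + (j : ℤ)) : ℤˣ) : ℤ) •
          (zchoose (n + (j : ℤ)) j • (⇑d)^[j] (P.coeff (n + (j : ℤ)))) = 0 := by
      intro j
      rw [hN _ (by omega), Function.iterate_fixed hz j, smul_zero, smul_zero]
    beta_reduce
    rw [finsum_congr h, finsum_zero]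

/-- The residue of a pseudodifferential operator: the coefficient of `∂^{-1}`. -/
def Res (P : PDO R) : R := P.coeff (-1)

/-- Powers of a pseudodifferential operator. -/
noncomputable def npow (P : PDO R) : ℕ → PDO R
  | 0 => Dpow 0
  | (k + 1) => mul d P (npow P k)

end PDO
end ExtendedDToda

namespace ExtendedDToda

/-! ### Binomial coefficients and signs -/

theorem zchoose_zero (n : ℤ) : zchoose n 0 = 1 := by
  unfold zchoose; split_ifs <;> simp

theorem zchoose_of_lt (n j : ℕ) (h : n < j) : zchoose (n : ℤ) j = 0 := by
  unfold zchoose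
  rw [if_pos (by omega), Int.toNat_natCast, Nat.choose_eq_zero_of_lt h, Nat.cast_zero]

/-- Pascal's rule for an integer upper argument. -/
theorem zchoose_succ (n : ℤ) (j : ℕ) :
    zchoose (n + 1) (j + 1) = zchoose n j + zchoose n (j + 1) := by
  rcases lt_trichotomy n (-1) with h | h | h
  · obtain ⟨t, rfl⟩ : ∃ t : ℕ, n = -(t + 2) := ⟨(-n - 2).toNat, by omega⟩
    unfold zchoose
    rw [if_neg (by omega), if_neg (by omega), if_neg (by omega)]
    have e1 : (((j + 1 : ℕ) : ℤ) - 1 - (-(t + 2) + 1)).toNat = j + 1 + t := by omega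
    have e2 : ((j : ℤ) - 1 - (-(t + 2))).toNat = j + 1 + t := by omega
    have e3 : (((j + 1 : ℕ) : ℤ) - 1 - (-(t + 2))).toNat = j + 1 + t + 1 := by omega
    rw [e1, e2, e3, Nat.choose_succ_succ (j + 1 + t) j]
    push_cast
    ring
  · subst h
    unfold zchoose
    have e2 : ((j : ℤ) - 1 - (-1)).toNat = j := by omega
    have e3 : (((j + 1 : ℕ) : ℤ) - 1 - (-1)).toNat = j + 1 := by omega
    rw [if_pos (by omega), if_neg (by omega), if_neg (by omega), e2, e3]
    simp [pow_succ]
  · obtain ⟨t, rfl⟩ : ∃ t : ℕ, n = t := ⟨n.toNat, by omega⟩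
    unfold zchoose
    have e1 : ((t : ℤ) + 1).toNat = t + 1 := by omega
    rw [if_pos (by omega), if_pos (by omega), if_pos (by omega), e1, Int.toNat_natCast,
      Nat.choose_succ_succ]
    push_cast
    ring

/-- The sign `(-1)^m`, `m ∈ ℤ`, as an integer. -/
def sg (m : ℤ) : ℤ := (((-1 : ℤˣ) ^ m : ℤˣ) : ℤ)

theorem sg_add (m n : ℤ) : sg (m + n) = sg m * sg n := by
  unfold sg; rw [zpow_add]; push_cast; rfl

theorem sg_zero : sg 0 = 1 := by simp [sg]

theorem sg_one : sg 1 = -1 := by simp [sg]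

theorem sg_add_one (m : ℤ) : sg (m + 1) = -sg m := by rw [sg_add, sg_one]; ring

theorem sg_sub_one (m : ℤ) : sg (m - 1) = -sg m := by
  have := sg_add_one (m - 1)
  rw [sub_add_cancel] at this
  rw [this, neg_neg]

theorem sg_mul_self (m : ℤ) : sg m * sg m = 1 := by
  rw [← sg_add]
  unfold sg
  rw [zpow_add, Int.units_mul_self, Units.val_one]

namespace PDO

variable {R : Type} [CommRing R]

theorem ext' {P Q : PDO R} (h : ∀ n, P.coeff n = Q.coeff n) : P = Q := by
  cases P; cases Q; congr; exact funext h

/-- The operator `P` has order at most `N`. -/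
def Bd (P : PDO R) (N : ℤ) : Prop := ∀ n : ℤ, N < n → P.coeff n = 0

theorem bd_ofR (f : R) : Bd (ofR f) 0 := fun _ hn => if_neg (by omega)

theorem bd_Dpow (k : ℤ) : Bd (Dpow k : PDO R) k := fun _ hn => if_neg (by omega)

/-- Summation by parts behind `∂^{a+1} = ∂ · ∂^a`, before the top term is discarded. -/
theorem sum_pascal (a : ℤ) (u : ℕ → R) (K : ℕ) :
    ∑ j ∈ Finset.range (K + 1), zchoose a j • (u j + u (j + 1)) =
      ∑ j ∈ Finset.range (K + 1), zchoose (a + 1) j • u j + zchoose a K • u (K + 1) := by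
  induction K with
  | zero => simp [zchoose_zero]
  | succ K ih =>
    rw [Finset.sum_range_succ, ih, Finset.sum_range_succ _ (K + 1), zchoose_succ, smul_add,
      add_smul]
    abel

/-- Summation by parts behind `(∂Q)^* = -Q^*∂` and `(Q∂)^* = -∂Q^*`, before the top term is
discarded. -/
theorem sum_pascal_sg (n : ℤ) (u : ℕ → R) (K : ℕ) :
    ∑ j ∈ Finset.range (K + 1), sg (n + j) • (zchoose (n + j) j • (u j + u (j + 1))) =
      ∑ j ∈ Finset.range (K + 1), sg (n + j) • (zchoose (n - 1 + j) j • u j)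
        + sg (n + K) • (zchoose (n + K) K • u (K + 1)) := by
  induction K with
  | zero => simp [zchoose_zero]
  | succ K ih =>
    rw [Finset.sum_range_succ, ih, Finset.sum_range_succ _ (K + 1)]
    have e1 : n + ((K + 1 : ℕ) : ℤ) = n + K + 1 := by push_cast; ring
    have e2 : n - 1 + ((K + 1 : ℕ) : ℤ) = n + K := by push_cast; ring
    rw [e1, e2, zchoose_succ, sg_add_one]
    simp only [smul_add, add_smul, neg_smul]
    abel

variable (d : Derivation ℤ R R)

/-! ### The product and its associativity -/

theorem iter_zero (j : ℕ) : (⇑d)^[j] 0 = 0 := Function.iterate_fixed (map_zero d) j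

theorem iter_add (j : ℕ) (x y : R) : (⇑d)^[j] (x + y) = (⇑d)^[j] x + (⇑d)^[j] y :=
  iterate_map_add d j x y

theorem iter_sum {ι : Type*} (j : ℕ) (s : Finset ι) (f : ι → R) :
    (⇑d)^[j] (∑ i ∈ s, f i) = ∑ i ∈ s, (⇑d)^[j] (f i) := by
  classical
  induction s using Finset.induction_on with
  | empty => simp
  | insert a s ha ih => rw [Finset.sum_insert ha, Finset.sum_insert ha, iter_add, ih]

theorem iter_one (j : ℕ) : (⇑d)^[j + 1] 1 = 0 := by
  rw [Function.iterate_succ_apply, Derivation.map_one_eq_zero, iter_zero]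

/-- Coefficients of `∂^a S` as a finite sum. -/
theorem Dpow_mul_coeff (a : ℤ) {S : PDO R} {M : ℤ} (hS : Bd S M) (n : ℤ) (K : ℕ)
    (hK : M < n - a + K) :
    (mul d (Dpow a) S).coeff n =
      ∑ j ∈ Finset.range K, zchoose a j • (⇑d)^[j] (S.coeff (n - a + j)) := by
  change ∑ᶠ p : ℤ × ℕ, _ = _
  rw [finsum_eq_sum_of_support_subset (s := {a} ×ˢ Finset.range K), Finset.sum_product,
    Finset.sum_singleton]
  · simp [Dpow]
  · intro p hp
    rw [Function.mem_support] at hp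
    simp only [Finset.coe_product, Finset.coe_singleton, Set.mem_prod, Set.mem_singleton_iff,
      Finset.coe_range, Set.mem_Iio]
    by_contra hc
    apply hp
    by_cases h1 : p.1 = a
    · have h2 : K ≤ p.2 := by
        by_contra h; exact hc ⟨h1, by omega⟩
      rw [hS _ (by omega), iter_zero, smul_zero, mul_zero]
    · simp [Dpow, h1]

theorem bd_Dpow_mul (a : ℤ) {S : PDO R} {M : ℤ} (hS : Bd S M) :
    Bd (mul d (Dpow a) S) (a + M) := by
  intro n hn
  rw [Dpow_mul_coeff d a hS n 0 (by push_cast; omega)]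
  simp

/-- The product in terms of left multiplications by powers of `∂`: `PQ = Σ_m p_m (∂^m Q)`. -/
theorem mul_coeff {P Q : PDO R} {N M : ℤ} (hP : Bd P N) (hQ : Bd Q M) (n A B : ℤ)
    (hA : A ≤ n - M) (hB : N ≤ B) :
    (mul d P Q).coeff n =
      ∑ m ∈ Finset.Icc A B, P.coeff m * (mul d (Dpow m) Q).coeff n := by
  change ∑ᶠ p : ℤ × ℕ, _ = _
  rw [finsum_eq_sum_of_support_subset
    (s := Finset.Icc A B ×ˢ Finset.range ((M - n + B).toNat + 1)), Finset.sum_product]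
  · refine Finset.sum_congr rfl fun m hm => ?_
    rw [Finset.mem_Icc] at hm
    rw [Dpow_mul_coeff d m hQ n ((M - n + B).toNat + 1) (by push_cast; omega), Finset.mul_sum]
  · intro p hp
    rw [Function.mem_support] at hp
    simp only [Finset.coe_product, Set.mem_prod, Finset.coe_Icc, Set.mem_Icc,
      Finset.coe_range, Set.mem_Iio]
    by_contra hc
    apply hp
    by_cases h1 : N < p.1
    · rw [hP _ h1, zero_mul]
    · rw [hQ _ (by omega), iter_zero, smul_zero, mul_zero]

theorem bd_mul {P Q : PDO R} {N M : ℤ} (hP : Bd P N) (hQ : Bd Q M) :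
    Bd (mul d P Q) (N + M) := by
  intro n hn
  rw [mul_coeff d hP hQ n (n - M) N le_rfl le_rfl, Finset.Icc_eq_empty (by omega),
    Finset.sum_empty]

theorem one_mul' (S : PDO R) : mul d (Dpow 0) S = S := by
  obtain ⟨M, hM⟩ := S.bdd
  refine ext' fun n => ?_
  rw [Dpow_mul_coeff d 0 hM n ((M - n).toNat + 1 + 1) (by push_cast; omega),
    Finset.sum_range_succ', Finset.sum_eq_zero]
  · simp [zchoose_zero]
  · intro j _
    have := zchoose_of_lt 0 (j + 1) (by omega)
    rw [Nat.cast_zero] at this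
    rw [this, zero_smul]

theorem D_coeff (S : PDO R) (n : ℤ) :
    (mul d (Dpow 1) S).coeff n = S.coeff (n - 1) + d (S.coeff n) := by
  obtain ⟨M, hM⟩ := S.bdd
  rw [Dpow_mul_coeff d 1 hM n ((M - n).toNat + 1 + 1 + 1) (by push_cast; omega),
    Finset.sum_range_succ', Finset.sum_range_succ', Finset.sum_eq_zero]
  · have := zchoose_succ 0 0
    have h0 := zchoose_of_lt 0 1 (by omega)
    rw [zero_add, zchoose_zero] at this
    rw [Nat.cast_zero] at h0
    simp [zchoose_zero, this, h0, add_comm]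
  · intro j _
    have := zchoose_of_lt 1 (j + 1 + 1) (by omega)
    rw [Nat.cast_one] at this
    rw [this, zero_smul]

theorem Dpow_succ_mul (a : ℤ) (S : PDO R) :
    mul d (Dpow (a + 1)) S = mul d (Dpow 1) (mul d (Dpow a) S) := by
  obtain ⟨M, hM⟩ := S.bdd
  refine ext' fun n => ?_
  set K := (M - n + a).toNat + 2 with hK
  rw [D_coeff, Dpow_mul_coeff d (a + 1) hM n (K + 1) (by push_cast; omega),
    Dpow_mul_coeff d a hM (n - 1) (K + 1) (by push_cast; omega),
    Dpow_mul_coeff d a hM n (K + 1) (by push_cast; omega)]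
  have key := sum_pascal a (fun j => (⇑d)^[j] (S.coeff (n - 1 - a + j))) K
  have hz : (⇑d)^[K + 1] (S.coeff (n - 1 - a + ((K + 1 : ℕ) : ℤ))) = 0 := by
    rw [hM _ (by push_cast; omega), iter_zero]
  simp only [hz, smul_zero, add_zero, smul_add, Finset.sum_add_distrib] at key
  rw [map_sum]
  have e1 : n - (a + 1) = n - 1 - a := by ring
  rw [e1, ← key]
  congr 1
  refine Finset.sum_congr rfl fun j _ => ?_
  have e2 : n - 1 - a + ((j + 1 : ℕ) : ℤ) = n - a + j := by push_cast; ring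
  rw [e2, Function.iterate_succ_apply', map_zsmul]

/-- Left multiplication by `∂` is injective, stated for sequences supported in bounded degree. -/
theorem D_inj (f : ℤ → R) (N : ℤ) (hN : ∀ n, N < n → f n = 0)
    (h : ∀ n, f (n - 1) + d (f n) = 0) (n : ℤ) : f n = 0 := by
  have : ∀ k : ℕ, f (N + 1 - k) = 0 := by
    intro k
    induction k with
    | zero => exact hN _ (by push_cast; omega)
    | succ k ih =>
      have := h (N + 1 - k)
      rw [ih, map_zero, add_zero] at this
      rw [← this]; congr 1; push_cast; ring
  by_cases hn : N < n
  · exact hN n hn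
  · have := this (N + 1 - n).toNat
    rwa [show N + 1 - ((N + 1 - n).toNat : ℤ) = n by omega] at this

theorem D_mul_assoc (Q S : PDO R) :
    mul d (mul d (Dpow 1) Q) S = mul d (Dpow 1) (mul d Q S) := by
  obtain ⟨M, hM⟩ := Q.bdd
  obtain ⟨T, hT⟩ := S.bdd
  refine ext' fun n => ?_
  rw [D_coeff, mul_coeff d (bd_Dpow_mul d 1 hM) hT n (n - T - 1 + 1) (M + 1) (by omega) (by omega),
    mul_coeff d hM hT (n - 1) (n - T - 1) M (by omega) le_rfl]
  rw [mul_coeff d hM hT n (n - T - 1 + 1) (M + 1) (by omega) (by omega), map_sum]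
  simp only [D_coeff, add_mul, Finset.sum_add_distrib, Derivation.leibniz, smul_eq_mul]
  have h1 : ∑ m ∈ Finset.Icc (n - T - 1 + 1) (M + 1),
      Q.coeff (m - 1) * (mul d (Dpow m) S).coeff n =
      ∑ m ∈ Finset.Icc (n - T - 1) M, Q.coeff m * (mul d (Dpow (m + 1)) S).coeff n := by
    rw [← Finset.map_add_right_Icc, Finset.sum_map]
    simp
  have h2 : ∑ m ∈ Finset.Icc (n - T - 1 + 1) (M + 1),
      Q.coeff m * d ((mul d (Dpow m) S).coeff n) =
      ∑ m ∈ Finset.Icc (n - T - 1) M, Q.coeff m * d ((mul d (Dpow m) S).coeff n) := by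
    have hsub1 : Finset.Icc (n - T - 1 + 1) M ⊆ Finset.Icc (n - T - 1 + 1) (M + 1) :=
      Finset.Icc_subset_Icc le_rfl (by omega)
    have hsub2 : Finset.Icc (n - T - 1 + 1) M ⊆ Finset.Icc (n - T - 1) M :=
      Finset.Icc_subset_Icc (by omega) le_rfl
    rw [← Finset.sum_subset hsub1, ← Finset.sum_subset hsub2]
    · intro m hm hm'
      rw [Finset.mem_Icc] at hm hm'
      rw [bd_Dpow_mul d m hT n (by omega), map_zero, mul_zero]
    · intro m hm hm'
      rw [Finset.mem_Icc] at hm hm'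
      rw [hM m (by omega), zero_mul]
  rw [h1, h2, ← add_assoc, ← Finset.sum_add_distrib]
  congr 1
  · refine Finset.sum_congr rfl fun m _ => ?_
    rw [Dpow_succ_mul, D_coeff, mul_add]
  · exact Finset.sum_congr rfl fun m _ => mul_comm _ _

/-- Associativity for `∂^a`; negative powers are reached by cancelling `∂`. -/
theorem Dpow_mul_assoc (a : ℤ) (Q S : PDO R) :
    mul d (mul d (Dpow a) Q) S = mul d (Dpow a) (mul d Q S) := by
  induction a using Int.induction_on with
  | zero => rw [one_mul', one_mul']
  | succ a ih => rw [Dpow_succ_mul, D_mul_assoc, ih, ← Dpow_succ_mul]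
  | pred a ih =>
    obtain ⟨N, hN⟩ := (mul d (mul d (Dpow (-a - 1)) Q) S).bdd
    obtain ⟨M, hM⟩ := (mul d (Dpow (-a - 1)) (mul d Q S)).bdd
    refine ext' fun n => sub_eq_zero.1 ?_
    refine D_inj d (fun n => (mul d (mul d (Dpow (-a - 1)) Q) S).coeff n -
      (mul d (Dpow (-a - 1)) (mul d Q S)).coeff n) (max N M) ?_ ?_ n
    · intro n hn
      rw [hN n ((le_max_left N M).trans_lt hn), hM n ((le_max_right N M).trans_lt hn), sub_zero]
    · intro n
      have h1 := D_coeff d (mul d (mul d (Dpow (-a - 1)) Q) S) n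
      have h2 := D_coeff d (mul d (Dpow (-a - 1)) (mul d Q S)) n
      rw [← D_mul_assoc, ← Dpow_succ_mul, sub_add_cancel, ih] at h1
      rw [← Dpow_succ_mul, sub_add_cancel, h1] at h2
      rw [map_sub]
      linear_combination h2

theorem mul_assoc' (P Q S : PDO R) :
    mul d (mul d P Q) S = mul d P (mul d Q S) := by
  obtain ⟨N, hN⟩ := P.bdd
  obtain ⟨M, hM⟩ := Q.bdd
  obtain ⟨T, hT⟩ := S.bdd
  refine ext' fun n => ?_
  rw [mul_coeff d (bd_mul d hN hM) hT n (n - T) (N + M) le_rfl le_rfl,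
    mul_coeff d hN (bd_mul d hM hT) n (n - T - M) N (by omega) le_rfl]
  have h1 : ∀ k ∈ Finset.Icc (n - T) (N + M),
      (mul d P Q).coeff k * (mul d (Dpow k) S).coeff n =
      ∑ m ∈ Finset.Icc (n - T - M) N,
        P.coeff m * (mul d (Dpow m) Q).coeff k * (mul d (Dpow k) S).coeff n := by
    intro k hk
    rw [Finset.mem_Icc] at hk
    rw [mul_coeff d hN hM k (n - T - M) N (by omega) le_rfl, Finset.sum_mul]
  rw [Finset.sum_congr rfl h1, Finset.sum_comm]
  refine Finset.sum_congr rfl fun m hm => ?_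
  rw [Finset.mem_Icc] at hm
  rw [← Dpow_mul_assoc, mul_coeff d (bd_Dpow_mul d m hM) hT n (n - T) (N + M) le_rfl (by omega),
    Finset.mul_sum]
  exact Finset.sum_congr rfl fun k _ => mul_assoc _ _ _

theorem Dpow_mul_Dpow (a b : ℤ) : mul d (Dpow a) (Dpow b) = (Dpow (a + b) : PDO R) := by
  refine ext' fun n => ?_
  rw [Dpow_mul_coeff d a (bd_Dpow b) n ((b - n + a).toNat + 1 + 1) (by push_cast; omega),
    Finset.sum_range_succ', Finset.sum_eq_zero]
  · simp [zchoose_zero, Dpow, sub_eq_iff_eq_add, add_comm]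
  · intro j _
    simp only [Dpow]
    split_ifs
    · rw [iter_one, smul_zero]
    · rw [iter_zero, smul_zero]

theorem mul_Dpow_coeff (P : PDO R) (k n : ℤ) :
    (mul d P (Dpow k)).coeff n = P.coeff (n - k) := by
  obtain ⟨N, hN⟩ := P.bdd
  rw [mul_coeff d hN (bd_Dpow k) n (n - k) (max N (n - k)) le_rfl (le_max_left _ _),
    Finset.sum_eq_single (n - k)]
  · rw [Dpow_mul_Dpow]; simp [Dpow]
  · intro m _ hm
    have : n ≠ m + k := by omega
    rw [Dpow_mul_Dpow]; simp [Dpow, this]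
  · intro h
    exact absurd (Finset.mem_Icc.2 ⟨le_rfl, le_max_right _ _⟩) h

theorem mul_one' (P : PDO R) : mul d P (Dpow 0) = P :=
  ext' fun n => by rw [mul_Dpow_coeff, sub_zero]

theorem ofR_mul_coeff (f : R) (Q : PDO R) (n : ℤ) :
    (mul d (ofR f) Q).coeff n = f * Q.coeff n := by
  obtain ⟨M, hM⟩ := Q.bdd
  rw [mul_coeff d (bd_ofR f) hM n (min 0 (n - M)) 0 (min_le_right _ _) le_rfl,
    Finset.sum_eq_single 0]
  · simp [one_mul', ofR]
  · intro m _ hm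
    simp [ofR, hm]
  · intro h
    exact absurd (Finset.mem_Icc.2 ⟨min_le_left _ _, le_rfl⟩) h

theorem ofR_mul_ofR (f g : R) : mul d (ofR f) (ofR g) = ofR (f * g) :=
  ext' fun n => by rw [ofR_mul_coeff]; simp [ofR]

/-! ### The adjoint -/

theorem bd_adj {P : PDO R} {N : ℤ} (hP : Bd P N) : Bd (adj d P) N := by
  intro n hn
  change ∑ᶠ j : ℕ, _ = _
  rw [← finsum_zero (α := ℕ)]
  refine finsum_congr fun j => ?_
  rw [hP _ (by omega), iter_zero, smul_zero, smul_zero]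

theorem adj_coeff {P : PDO R} {N : ℤ} (hP : Bd P N) (n : ℤ) (K : ℕ) (hK : N < n + K) :
    (adj d P).coeff n =
      ∑ j ∈ Finset.range K,
        sg (n + j) • (zchoose (n + j) j • (⇑d)^[j] (P.coeff (n + j))) := by
  change ∑ᶠ j : ℕ, _ = _
  rw [finsum_eq_sum_of_support_subset (s := Finset.range K)]
  · rfl
  · intro j hj
    rw [Function.mem_support] at hj
    rw [Finset.coe_range, Set.mem_Iio]
    by_contra hc
    apply hj
    rw [hP _ (by omega), iter_zero, smul_zero, smul_zero]

theorem Dpow_ofR_coeff (k n : ℤ) (j : ℕ) (f : R) (h : k = n + j) :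
    (mul d (Dpow k) (ofR f)).coeff n = zchoose k j • (⇑d)^[j] f := by
  rw [Dpow_mul_coeff d k (bd_ofR f) n (j + 1) (by push_cast; omega),
    Finset.sum_range_succ, Finset.sum_eq_zero]
  · have : n - k + (j : ℤ) = 0 := by omega
    simp [ofR, this]
  · intro i hi
    rw [Finset.mem_range] at hi
    have : n - k + (i : ℤ) ≠ 0 := by omega
    simp [ofR, this]

theorem Dpow_ofR_sum {ι : Type*} (k n : ℤ) (s : Finset ι) (f : ι → R) :
    (mul d (Dpow k) (ofR (∑ i ∈ s, f i))).coeff n =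
      ∑ i ∈ s, (mul d (Dpow k) (ofR (f i))).coeff n := by
  by_cases h : n ≤ k
  · have hk : k = n + (k - n).toNat := by omega
    simp only [Dpow_ofR_coeff d k n _ _ hk, iter_sum, Finset.smul_sum]
  · rw [bd_Dpow_mul d k (bd_ofR _) n (by omega), Finset.sum_eq_zero]
    intro i _
    exact bd_Dpow_mul d k (bd_ofR _) n (by omega)

/-- The adjoint as `P^* = Σ_k (-1)^k ∂^k p_k`. -/
theorem adj_coeff' {P : PDO R} {N : ℤ} (hP : Bd P N) (n A B : ℤ) (hA : A ≤ n) (hB : N ≤ B) :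
    (adj d P).coeff n =
      ∑ k ∈ Finset.Icc A B, sg k • (mul d (Dpow k) (ofR (P.coeff k))).coeff n := by
  rw [adj_coeff d hP n (B - n + 1).toNat (by omega)]
  have hsub : Finset.Icc n B ⊆ Finset.Icc A B := Finset.Icc_subset_Icc hA le_rfl
  rw [← Finset.sum_subset hsub]
  · refine Finset.sum_bij (fun j _ => n + (j : ℤ)) ?_ ?_ ?_ ?_
    · intro j hj
      rw [Finset.mem_range] at hj
      rw [Finset.mem_Icc]; omega
    · intro i _ j _ h; simpa using h
    · intro k hk
      rw [Finset.mem_Icc] at hk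
      exact ⟨(k - n).toNat, by rw [Finset.mem_range]; omega, by omega⟩
    · intro j _
      rw [Dpow_ofR_coeff d _ n j _ rfl]
  · intro k hk hk'
    rw [Finset.mem_Icc] at hk hk'
    rw [bd_Dpow_mul d k (bd_ofR _) n (by omega), smul_zero]

/-- `(∂Q)^* = -Q^*∂`, coefficientwise. -/
theorem adj_D_mul (Q : PDO R) (n : ℤ) :
    (adj d (mul d (Dpow 1) Q)).coeff n = -(adj d Q).coeff (n - 1) := by
  obtain ⟨M, hM⟩ := Q.bdd
  set K := (M - n).toNat + 2 with hK
  rw [adj_coeff d (bd_Dpow_mul d 1 hM) n (K + 1) (by push_cast; omega),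
    adj_coeff d hM (n - 1) (K + 1) (by push_cast; omega)]
  have key := sum_pascal_sg n (fun j => (⇑d)^[j] (Q.coeff (n - 1 + j))) K
  have hz : (⇑d)^[K + 1] (Q.coeff (n - 1 + ((K + 1 : ℕ) : ℤ))) = 0 := by
    rw [hM _ (by push_cast; omega), iter_zero]
  simp only [hz, smul_zero, add_zero] at key
  rw [← Finset.sum_neg_distrib]
  refine Eq.trans (Finset.sum_congr rfl fun j _ => ?_)
    (key.trans (Finset.sum_congr rfl fun j _ => ?_))
  · have e1 : n + (j : ℤ) - 1 = n - 1 + j := by ring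
    have e2 : n - 1 + ((j + 1 : ℕ) : ℤ) = n + j := by push_cast; ring
    rw [D_coeff, iter_add, e1, e2, Function.iterate_succ_apply]
  · have e1 : n - 1 + (j : ℤ) = n + j - 1 := by ring
    rw [e1, sg_sub_one, neg_smul, neg_neg]

theorem adj_mul_D (P : PDO R) (n : ℤ) :
    (adj d (mul d P (Dpow 1))).coeff n = -(mul d (Dpow 1) (adj d P)).coeff n := by
  obtain ⟨M, hM⟩ := P.bdd
  set K := (M - n).toNat + 2 with hK
  rw [D_coeff, adj_coeff d (bd_mul d hM (bd_Dpow 1)) n (K + 1) (by push_cast; omega),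
    adj_coeff d hM (n - 1) (K + 1) (by push_cast; omega),
    adj_coeff d hM n (K + 1) (by push_cast; omega)]
  have key := sum_pascal_sg n (fun j => (⇑d)^[j] (P.coeff (n - 1 + j))) K
  have hz : (⇑d)^[K + 1] (P.coeff (n - 1 + ((K + 1 : ℕ) : ℤ))) = 0 := by
    rw [hM _ (by push_cast; omega), iter_zero]
  simp only [hz, smul_zero, add_zero] at key
  rw [map_sum]
  have h1 : ∑ j ∈ Finset.range (K + 1), sg (n - 1 + j) •
      (zchoose (n - 1 + j) j • (⇑d)^[j] (P.coeff (n - 1 + j))) =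
      -∑ j ∈ Finset.range (K + 1), sg (n + j) •
      (zchoose (n - 1 + j) j • (⇑d)^[j] (P.coeff (n - 1 + j))) := by
    rw [← Finset.sum_neg_distrib]
    refine Finset.sum_congr rfl fun j _ => ?_
    have e1 : sg (n - 1 + (j : ℤ)) = - sg (n + j) := by
      rw [← sg_sub_one]; congr 1; ring
    rw [e1, neg_smul]
  rw [h1, ← key, neg_add, neg_neg, ← Finset.sum_neg_distrib, ← Finset.sum_add_distrib]
  refine Finset.sum_congr rfl fun j _ => ?_
  have e1 : n + (j : ℤ) - 1 = n - 1 + j := by ring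
  have e2 : n - 1 + ((j + 1 : ℕ) : ℤ) = n + j := by push_cast; ring
  rw [mul_Dpow_coeff, e1, e2, map_zsmul, map_zsmul, ← Function.iterate_succ_apply' (⇑d), smul_add,
    smul_add]
  abel

/-- `(∂^m Q)^* = (-1)^m Q^* ∂^m`, coefficientwise. -/
theorem adj_Dpow_mul (m : ℤ) (Q : PDO R) (n : ℤ) :
    (adj d (mul d (Dpow m) Q)).coeff n = sg m • (adj d Q).coeff (n - m) := by
  induction m using Int.induction_on generalizing n with
  | zero => rw [one_mul', sg_zero, one_smul, sub_zero]
  | succ m ih =>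
    rw [Dpow_succ_mul, adj_D_mul, ih, sg_add_one, neg_smul]
    congr 3; ring
  | pred m ih =>
    have h := adj_D_mul d (mul d (Dpow (-m - 1)) Q) (n + 1)
    rw [← Dpow_succ_mul, sub_add_cancel, ih, add_sub_cancel_right] at h
    rw [sg_sub_one, neg_smul, ← neg_eq_iff_eq_neg, ← h]
    congr 2; ring

/-- `(P ∂^k)^* = (-1)^k ∂^k P^*`, coefficientwise. -/
theorem Dpow_mul_adj (k : ℤ) (P : PDO R) (n : ℤ) :
    (mul d (Dpow k) (adj d P)).coeff n = sg k • (adj d (mul d P (Dpow k))).coeff n := by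
  induction k using Int.induction_on generalizing n with
  | zero => rw [one_mul', mul_one', sg_zero, one_smul]
  | succ k ih =>
    have e : (Dpow (k + 1) : PDO R) = mul d (Dpow k) (Dpow 1) := by rw [Dpow_mul_Dpow]
    rw [Dpow_succ_mul, D_coeff, ih, ih, e, ← mul_assoc', adj_mul_D, D_coeff, sg_add_one,
      map_zsmul, neg_smul, smul_neg, neg_neg, smul_add]
  | pred k ih =>
    obtain ⟨N, hN⟩ := (mul d (Dpow (-k - 1)) (adj d P)).bdd
    obtain ⟨M, hM⟩ := (adj d (mul d P (Dpow (-k - 1)))).bdd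
    refine sub_eq_zero.1 ?_
    refine D_inj d (fun n => (mul d (Dpow (-k - 1)) (adj d P)).coeff n -
      sg (-k - 1) • (adj d (mul d P (Dpow (-k - 1)))).coeff n) (max N M) ?_ ?_ n
    · intro n hn
      rw [hN n ((le_max_left N M).trans_lt hn), hM n ((le_max_right N M).trans_lt hn), smul_zero,
        sub_zero]
    · intro n
      have h1 := D_coeff d (mul d (Dpow (-k - 1)) (adj d P)) n
      have h2 := adj_mul_D d (mul d P (Dpow (-k - 1))) n
      rw [← Dpow_succ_mul, sub_add_cancel, ih] at h1
      rw [mul_assoc', Dpow_mul_Dpow, sub_add_cancel, D_coeff] at h2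
      rw [h2] at h1
      simp only [map_sub, map_zsmul, sg_sub_one, neg_smul, smul_neg, smul_add, neg_add, map_neg] at h1 ⊢
      linear_combination -h1

/-- The case `P = f` of the anti-homomorphism property. -/
theorem adj_ofR_mul (f : R) (Q : PDO R) :
    adj d (mul d (ofR f) Q) = mul d (adj d Q) (ofR f) := by
  obtain ⟨M, hM⟩ := Q.bdd
  refine ext' fun n => ?_
  have hb : Bd (mul d (ofR f) Q) M := by
    have := bd_mul d (bd_ofR f) hM
    rwa [zero_add] at this
  rw [adj_coeff' d hb n n M le_rfl le_rfl,
    mul_coeff d (bd_adj d hM) (bd_ofR f) n n M (by omega) le_rfl]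
  have h1 : ∀ k ∈ Finset.Icc n M,
      sg k • (mul d (Dpow k) (ofR ((mul d (ofR f) Q).coeff k))).coeff n =
      ∑ i ∈ Finset.Icc n M, sg k • (mul d (Dpow k) (ofR (Q.coeff k))).coeff i *
        (mul d (Dpow i) (ofR f)).coeff n := by
    intro k hk
    rw [Finset.mem_Icc] at hk
    rw [ofR_mul_coeff, mul_comm, ← ofR_mul_ofR d, ← Dpow_mul_assoc,
      mul_coeff d (bd_Dpow_mul d k (bd_ofR _)) (bd_ofR f) n n M (by omega) (by omega),
      Finset.smul_sum]
    exact Finset.sum_congr rfl fun i _ => (smul_mul_assoc _ _ _).symm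
  rw [Finset.sum_congr rfl h1, Finset.sum_comm]
  refine Finset.sum_congr rfl fun i hi => ?_
  rw [Finset.mem_Icc] at hi
  rw [adj_coeff' d hM i n M hi.1 le_rfl, Finset.sum_mul]

theorem adj_mul (P Q : PDO R) : adj d (mul d P Q) = mul d (adj d Q) (adj d P) := by
  obtain ⟨N, hN⟩ := P.bdd
  obtain ⟨M, hM⟩ := Q.bdd
  refine ext' fun n => ?_
  -- `(PQ)^* = Σ_m (p_m ∂^m Q)^*`
  have hL : (adj d (mul d P Q)).coeff n =
      ∑ m ∈ Finset.Icc (n - M) N,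
        (adj d (mul d (ofR (P.coeff m)) (mul d (Dpow m) Q))).coeff n := by
    rw [adj_coeff' d (bd_mul d hN hM) n n (N + M) le_rfl le_rfl]
    have h1 : ∀ k ∈ Finset.Icc n (N + M),
        sg k • (mul d (Dpow k) (ofR ((mul d P Q).coeff k))).coeff n =
        ∑ m ∈ Finset.Icc (n - M) N, sg k • (mul d (Dpow k)
          (ofR ((mul d (ofR (P.coeff m)) (mul d (Dpow m) Q)).coeff k))).coeff n := by
      intro k hk
      rw [Finset.mem_Icc] at hk
      rw [mul_coeff d hN hM k (n - M) N (by omega) le_rfl, Dpow_ofR_sum, Finset.smul_sum]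
      exact Finset.sum_congr rfl fun m _ => by rw [ofR_mul_coeff]
    rw [Finset.sum_congr rfl h1, Finset.sum_comm]
    refine Finset.sum_congr rfl fun m hm => ?_
    rw [Finset.mem_Icc] at hm
    rw [adj_coeff' d (bd_mul d (bd_ofR _) (bd_Dpow_mul d m hM)) n n (N + M) le_rfl (by omega)]
  rw [hL, mul_coeff d (bd_adj d hM) (bd_adj d hN) n (n - N) M le_rfl le_rfl]
  -- both sides become `Σ_{m,k} (-1)^m (Q^*)_k ∂^{k+m} p_m`
  have h2 : ∀ m ∈ Finset.Icc (n - M) N,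
      (adj d (mul d (ofR (P.coeff m)) (mul d (Dpow m) Q))).coeff n =
      ∑ k ∈ Finset.Icc (n - N) M, sg m • (adj d Q).coeff k *
        (mul d (Dpow (k + m)) (ofR (P.coeff m))).coeff n := by
    intro m hm
    rw [Finset.mem_Icc] at hm
    rw [adj_ofR_mul, mul_coeff d (bd_adj d (bd_Dpow_mul d m hM)) (bd_ofR _) n (n - N + m) (M + m)
      (by omega) (by omega), ← Finset.map_add_right_Icc, Finset.sum_map]
    refine Finset.sum_congr rfl fun k _ => ?_
    simp only [addRightEmbedding_apply]
    rw [adj_Dpow_mul, add_sub_cancel_right]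
  have h3 : ∀ k ∈ Finset.Icc (n - N) M,
      (adj d Q).coeff k * (mul d (Dpow k) (adj d P)).coeff n =
      ∑ m ∈ Finset.Icc (n - M) N, sg m • (adj d Q).coeff k *
        (mul d (Dpow (k + m)) (ofR (P.coeff m))).coeff n := by
    intro k hk
    rw [Finset.mem_Icc] at hk
    rw [Dpow_mul_adj, adj_coeff' d (bd_mul d hN (bd_Dpow k)) n (n - M + k) (N + k) (by omega) le_rfl,
      ← Finset.map_add_right_Icc, Finset.sum_map, Finset.smul_sum, Finset.mul_sum]
    refine Finset.sum_congr rfl fun m _ => ?_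
    simp only [addRightEmbedding_apply]
    rw [mul_Dpow_coeff, add_sub_cancel_right, smul_smul, sg_add, mul_left_comm, sg_mul_self,
      mul_one, add_comm m k, mul_smul_comm, smul_mul_assoc]
  rw [Finset.sum_congr rfl h2, Finset.sum_congr rfl h3, Finset.sum_comm]

/-- Taking the adjoint changes the sign of the residue. -/
theorem adj_coeff_neg_one (P : PDO R) : (adj d P).coeff (-1) = -P.coeff (-1) := by
  obtain ⟨N, hN⟩ := P.bdd
  rw [adj_coeff d hN (-1) ((N + 1).toNat + 1) (by push_cast; omega), Finset.sum_range_succ',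
    Finset.sum_eq_zero]
  · have : sg (-1) = -1 := by simp [sg]
    simp [zchoose_zero, this]
  · intro j _
    have e : (-1 : ℤ) + ((j + 1 : ℕ) : ℤ) = j := by push_cast; ring
    rw [e, zchoose_of_lt j (j + 1) (by omega), zero_smul, smul_zero]

theorem adj_Dpow_neg_one : adj d (Dpow (-1) : PDO R) = neg (Dpow (-1)) := by
  refine ext' fun n => ?_
  rw [adj_coeff d (bd_Dpow (-1)) n ((-1 - n).toNat + 1 + 1) (by push_cast; omega),
    Finset.sum_range_succ', Finset.sum_eq_zero]
  · simp only [Dpow, neg, Nat.cast_zero, add_zero, zchoose_zero, one_smul, Function.iterate_zero,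
      id_eq]
    have : sg (-1) = -1 := by simp [sg]
    split_ifs with h
    · rw [zero_add, h, this]; simp
    · simp
  · intro j _
    simp only [Dpow]
    split_ifs
    · rw [iter_one, smul_zero, smul_zero]
    · rw [iter_zero, smul_zero, smul_zero]

/-! ### Signs and powers -/

theorem bd_neg {P : PDO R} {N : ℤ} (hP : Bd P N) : Bd (neg P) N := fun n hn => by
  change -P.coeff n = 0
  rw [hP n hn, neg_zero]

theorem neg_neg' (P : PDO R) : neg (neg P) = P := ext' fun _ => neg_neg _

theorem neg_mul' (P Q : PDO R) : mul d (neg P) Q = neg (mul d P Q) := by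
  obtain ⟨N, hN⟩ := P.bdd
  obtain ⟨M, hM⟩ := Q.bdd
  refine ext' fun n => ?_
  change _ = -(mul d P Q).coeff n
  rw [mul_coeff d hN hM n (n - M) N le_rfl le_rfl,
    mul_coeff d (bd_neg hN) hM n (n - M) N le_rfl le_rfl, ← Finset.sum_neg_distrib]
  exact Finset.sum_congr rfl fun m _ => neg_mul _ _

theorem mul_neg' (P Q : PDO R) : mul d P (neg Q) = neg (mul d P Q) := by
  have h : neg Q = mul d (neg (Dpow 0)) Q := by rw [neg_mul', one_mul']
  have h2 : mul d P (neg (Dpow 0)) = neg P := by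
    have e : (neg (Dpow 0) : PDO R) = ofR (-1) := ext' fun n => by
      simp only [neg, Dpow, ofR]; split_ifs <;> simp
    obtain ⟨N, hN⟩ := P.bdd
    refine ext' fun n => ?_
    have hb := bd_Dpow (R := R) 0
    rw [mul_coeff d hN (bd_neg hb) n n (max n N) (by omega) (le_max_right _ _)]
    have h3 : ∀ m, (mul d (Dpow m) (neg (Dpow 0))).coeff n = -(Dpow m : PDO R).coeff n := by
      intro m
      rw [Dpow_mul_coeff d m (bd_neg hb) n ((m - n).toNat + 1) (by push_cast; omega)]
      have := Dpow_mul_coeff d m hb n ((m - n).toNat + 1) (by push_cast; omega)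
      rw [mul_one'] at this
      rw [this, ← Finset.sum_neg_distrib]
      refine Finset.sum_congr rfl fun j _ => ?_
      simp only [neg]
      rw [iterate_map_neg, smul_neg]
    have h4 := mul_coeff d hN hb n n (max n N) (by omega) (le_max_right _ _)
    rw [mul_one'] at h4
    change _ = -P.coeff n
    rw [h4, ← Finset.sum_neg_distrib]
    refine Finset.sum_congr rfl fun m _ => ?_
    rw [h3, mul_one', mul_neg]
  rw [h, ← mul_assoc', h2, neg_mul']

theorem npow_succ' (L : PDO R) (k : ℕ) : npow d L (k + 1) = mul d (npow d L k) L := by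
  induction k with
  | zero => change mul d L (Dpow 0) = mul d (Dpow 0) L; rw [mul_one', one_mul']
  | succ k ih =>
    change mul d L (npow d L (k + 1)) = mul d (mul d L (npow d L k)) L
    rw [ih, mul_assoc']

/-- Conjugation by `∂` turns powers into powers, so `(L^k)^* = (-1)^k ∂ L^k ∂^{-1}`; this is the
case of odd `k`. -/
theorem adj_npow (L : PDO R)
    (hL : adj d L = neg (mul d (Dpow 1) (mul d L (Dpow (-1))))) (l : ℕ) :
    adj d (npow d L (2 * l + 1)) =
      neg (mul d (Dpow 1) (mul d (npow d L (2 * l + 1)) (Dpow (-1)))) := by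
  have hDD (X : PDO R) : mul d (Dpow (-1)) (mul d (Dpow 1) X) = X := by
    rw [← mul_assoc', Dpow_mul_Dpow, neg_add_cancel, one_mul']
  -- `ε` is the sign `(-1)^k`, that is, `neg` or `id`.
  have step (k : ℕ) (ε : PDO R → PDO R) (hε : ∀ X Y, mul d (ε X) Y = ε (mul d X Y))
      (h : adj d (npow d L k) = ε (mul d (Dpow 1) (mul d (npow d L k) (Dpow (-1))))) :
      adj d (npow d L (k + 1)) =
        neg (ε (mul d (Dpow 1) (mul d (npow d L (k + 1)) (Dpow (-1))))) := by
    have e : npow d L (k + 1) = mul d L (npow d L k) := rfl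
    rw [e, adj_mul, h, hL, mul_neg', hε, mul_assoc', mul_assoc', hDD, ← e, npow_succ',
      mul_assoc']
  induction l with
  | zero =>
    change adj d (mul d L (Dpow 0)) = neg (mul d (Dpow 1) (mul d (mul d L (Dpow 0)) _))
    rw [mul_one', hL]
  | succ l ih =>
    have h1 := step (2 * l + 1) neg (neg_mul' d) ih
    rw [neg_neg'] at h1
    exact step (2 * l + 2) id (fun _ _ => rfl) h1

end PDO
end ExtendedDToda

open ExtendedDToda ExtendedDToda.PDO in
/-- if `L^* = -∂·L·∂^{-1}`, then for every `l ≥ 0` the residue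
`Res_∂(L^{2l+1}·∂^{-1})` vanishes; equivalently, the coefficient of `∂^0` in
`L^{2l+1}` is zero. -/
theorem statement1 {R : Type} [CommRing R] [Invertible (2 : R)]
    (d : Derivation ℤ R R) (L : PDO R)
    (hL : adj d L = neg (mul d (Dpow 1) (mul d L (Dpow (-1))))) :
    ∀ l : ℕ, Res (mul d (npow d L (2 * l + 1)) (Dpow (-1))) = 0 ∧
      (npow d L (2 * l + 1)).coeff 0 = 0 := by
  intro l
  set X := npow d L (2 * l + 1) with hX
  have hP : adj d (mul d X (Dpow (-1))) = mul d X (Dpow (-1)) := by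
    rw [adj_mul, adj_Dpow_neg_one, hX, adj_npow d L hL, mul_neg', neg_mul', neg_neg',
      ← mul_assoc', Dpow_mul_Dpow, neg_add_cancel, one_mul']
  have h := adj_coeff_neg_one d (mul d X (Dpow (-1)))
  rw [hP] at h
  -- `P` is self-adjoint, so its residue equals its own negative.
  have h2 : (2 : R) * (mul d X (Dpow (-1))).coeff (-1) = 0 := by linear_combination h
  have h3 : (mul d X (Dpow (-1))).coeff (-1) = 0 := by
    have := congrArg (fun x => ⅟(2 : R) * x) h2
    simpa using this
  refine ⟨h3, ?_⟩
  rw [mul_Dpow_coeff] at h3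
  simpa using h3
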